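/- arXiv:2605.09221 — 2 statements merged into one kernel-verified Lean document; each statement's English description precedes it below -/
import Mathlib

section
/- If S is a version of the conditional expectation of Y given the σ-algebra generated by the pair (S, G), i.e. μ[Y | σ(S, G)] = S almost everywhere, then S is group-conditionally unbiased: E[S | {G = g}] = p_g for both g ∈ {a, b}. -/
open MeasureTheory

/-- Conditional expectation of `f` given the event `A`: `E[f | A] = (μ A)⁻¹ ∫_A f dμ`. -/
noncomputable def condExpEvent {Ω : Type*} [MeasurableSpace Ω] (μ : Measure Ω)
    (A : Set Ω) (f : Ω → ℝ) : ℝ :=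
  (μ A).toReal⁻¹ * ∫ ω in A, f ω ∂μ

/-- The σ-algebra generated by the pair `(S, G)`. -/
def sigmaSG {Ω : Type*} (S : Ω → ℝ) (G : Ω → Bool) : MeasurableSpace Ω :=
  MeasurableSpace.comap (fun ω => (S ω, G ω)) inferInstance

theorem setIntegral_eq_of_condExp_ae_eq {Ω E : Type*} {m m₀ : MeasurableSpace Ω} {μ : Measure Ω}
    [NormedAddCommGroup E] [NormedSpace ℝ E] [CompleteSpace E] {f g : Ω → E} {A : Set Ω}
    (hm : m ≤ m₀) [SigmaFinite (μ.trim hm)] (hf : Integrable f μ) (hfg : μ[f | m] =ᵐ[μ] g)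
    (hA : MeasurableSet[m] A) :
    ∫ ω in A, g ω ∂μ = ∫ ω in A, f ω ∂μ :=
  calc
    ∫ ω in A, g ω ∂μ = ∫ ω in A, (μ[f | m]) ω ∂μ := integral_congr_ae (ae_restrict_of_ae hfg.symm)
    _ = ∫ ω in A, f ω ∂μ := setIntegral_condExp hm hf hA

theorem integrable_of_ae_eq_zero_or_one {Ω : Type*} [MeasurableSpace Ω] {μ : Measure Ω}
    [IsFiniteMeasure μ] {f : Ω → ℝ} (hf : AEMeasurable f μ) (hf01 : ∀ᵐ ω ∂μ, f ω = 0 ∨ f ω = 1) :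
    Integrable f μ := by
  refine Integrable.of_mem_Icc 0 1 hf (hf01.mono fun ω hω => ?_)
  rcases hω with h | h <;> simp [h]

theorem sigmaSG_le {Ω : Type*} [𝓕 : MeasurableSpace Ω] {S : Ω → ℝ} {G : Ω → Bool}
    (hS : Measurable S) (hG : Measurable G) : sigmaSG S G ≤ 𝓕 :=
  (hS.prodMk hG).comap_le

theorem measurableSet_sigmaSG_group {Ω : Type*} (S : Ω → ℝ) (G : Ω → Bool) (g : Bool) :
    MeasurableSet[sigmaSG S G] {ω | G ω = g} :=
  (measurable_snd.comp (comap_measurable _)) (measurableSet_singleton g)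

theorem calibration_implies_unbiasedness_general {Ω : Type*} {m m₀ : MeasurableSpace Ω}
    {μ : Measure Ω} [IsFiniteMeasure μ] {Y S : Ω → ℝ} {A : Set Ω} (hm : m ≤ m₀)
    (hY : Integrable Y μ) (hcalib : μ[Y | m] =ᵐ[μ] S) (hA : MeasurableSet[m] A) (hμA : 0 < μ A) :
    condExpEvent μ A S = condExpEvent μ A Y := by
  rw [condExpEvent, condExpEvent, setIntegral_eq_of_condExp_ae_eq hm hY hcalib hA]

/-- **Calibration implies group-conditional unbiasedness.** If `S` is a version of
`E[Y | σ(S,G)]`, then `E[S | {G = g}] = p_g` for both groups. -/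
theorem calibration_implies_unbiasedness {Ω : Type*} [𝓕 : MeasurableSpace Ω]
    (μ : Measure Ω) [IsProbabilityMeasure μ]
    (Y : Ω → ℝ) (hYmeas : Measurable Y) (hY01 : ∀ ω, Y ω = 0 ∨ Y ω = 1)
    (G : Ω → Bool) (hGmeas : Measurable G)
    (hGa : 0 < μ {ω | G ω = true}) (hGb : 0 < μ {ω | G ω = false})
    (S : Ω → ℝ) (hSmeas : Measurable S)
    (hS01 : ∀ᵐ ω ∂μ, 0 ≤ S ω ∧ S ω ≤ 1)
    (p : Bool → ℝ) (hp : ∀ g, p g = condExpEvent μ {ω | G ω = g} Y)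
    -- calibration: S is a version of E[Y | σ(S,G)]
    (hcalib : μ[Y | sigmaSG S G] =ᵐ[μ] S) :
    ∀ g, condExpEvent μ {ω | G ω = g} S = p g := by
  intro g
  have hY : Integrable Y μ := integrable_of_ae_eq_zero_or_one hYmeas.aemeasurable (ae_of_all μ hY01)
  rw [hp g]
  exact calibration_implies_unbiasedness_general (sigmaSG_le hSmeas hGmeas) hY hcalib
    (measurableSet_sigmaSG_group S G g) (by cases g <;> assumption)
end

section
/- (Pokémon–KMR bridge, tail bound.) Let H be a real Hilbert space and φ : Ω → H a measurable map that is Bochner integrable on each of the four events {Y = y} ∩ {G = g} (all of positive measure). Let w ∈ H with ‖w‖ ≤ W, and set S(ω) := ⟨w, φ(ω)⟩; assume 0 ≤ S ≤ 1 almost surely and E[S | {G = g}] = p_g for both g (group-conditional unbiasedness). Define δ_y := E[φ | {Y = y} ∩ {G = a}] − E[φ | {Y = y} ∩ {G = b}] (Bochner conditional means) and ρ := max over g ∈ {a,b} of (p_{ḡ}·‖δ_1‖ + (1 − p_{ḡ})·‖δ_0‖), where ḡ is the group opposite to g. If p_a ≠ p_b, then for every t with 0 < t ≤ 1: μ{ω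 : |S(ω) − Y(ω)| > t} ≤ W · ρ / (|p_a − p_b| · t). -/
open MeasureTheory
open scoped RealInnerProductSpace

/-- Conditional (Bochner) mean of a vector-valued `f` given the event `A`. -/
noncomputable def condMeanVec {Ω H : Type*} [MeasurableSpace Ω] [NormedAddCommGroup H]
    [NormedSpace ℝ H] (μ : Measure Ω) (A : Set Ω) (f : Ω → H) : H :=
  (μ A).toReal⁻¹ • ∫ ω in A, f ω ∂μ

/-!
Let `m_y(g)` be the mean score of class `y` in group `g` and let `p_g` be the base rate. For
binary `Y`, unbiasedness in group `g` reads `p_g m_1(g) + (1 - p_g) m_0(g) = p_g`. Weighting the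
class differences `m_y(a) - m_y(b)` by the base rate of `b` and using both balance equations gives
`p_b (m_1(a) - m_1(b)) + (1 - p_b) (m_0(a) - m_0(b)) = (p_a - p_b) ((1 - m_1(a)) + m_0(a))`.
The last factor dominates the mean absolute error in group `a`, while the class differences are the
values of the bounded functional at `δ_y`. Exchanging the groups, averaging over them and applying
Markov's inequality gives the tail bound.
-/

theorem condExpEvent_eq_setAverage {Ω : Type*} [MeasurableSpace Ω] (μ : Measure Ω) (A : Set Ω)
    (f : Ω → ℝ) : condExpEvent μ A f = ⨍ ω in A, f ω ∂μ :=
  (setAverage_eq μ f A).symm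

theorem setOf_eq_one_union_setOf_eq_zero {Ω : Type*} {Y : Ω → ℝ}
    (hY01 : ∀ ω, Y ω = 0 ∨ Y ω = 1) :
    {ω | Y ω = 1} ∪ {ω | Y ω = 0} = Set.univ :=
  Set.eq_univ_of_forall fun ω ↦ (hY01 ω).symm

section Binary

variable {Ω : Type*} [MeasurableSpace Ω] {μ : Measure Ω} {Y : Ω → ℝ}

theorem integrable_of_integrableOn_classes (hY01 : ∀ ω, Y ω = 0 ∨ Y ω = 1) {E : Type*}
    [NormedAddCommGroup E] {f : Ω → E}
    (h1 : IntegrableOn f {ω | Y ω = 1} μ) (h0 : IntegrableOn f {ω | Y ω = 0} μ) :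
    Integrable f μ := by
  rw [← integrableOn_univ, ← setOf_eq_one_union_setOf_eq_zero hY01]
  exact h1.union h0

theorem integrable_of_binary [IsFiniteMeasure μ] (hY : Measurable Y)
    (hY01 : ∀ ω, Y ω = 0 ∨ Y ω = 1) : Integrable Y μ :=
  Integrable.of_bound hY.aestronglyMeasurable 1 <| .of_forall fun ω ↦ by
    rcases hY01 ω with h | h <;> simp [h]

theorem average_binary_mem_Icc [IsFiniteMeasure μ] [NeZero μ] (hY : Measurable Y)
    (hY01 : ∀ ω, Y ω = 0 ∨ Y ω = 1) : ⨍ ω, Y ω ∂μ ∈ Set.Icc (0 : ℝ) 1 :=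
  (convex_Icc 0 1).average_mem isClosed_Icc
    (.of_forall fun ω ↦ by rcases hY01 ω with h | h <;> simp [h])
    (integrable_of_binary hY hY01)

theorem average_binary_eq_div (hY : Measurable Y) (hY01 : ∀ ω, Y ω = 0 ∨ Y ω = 1) :
    ⨍ ω, Y ω ∂μ = μ.real {ω | Y ω = 1} / μ.real Set.univ := by
  have hind : Y = {ω | Y ω = 1}.indicator 1 := by
    ext ω
    rcases hY01 ω with h | h <;> simp [h]
  have hint : ∫ ω, Y ω ∂μ = μ.real {ω | Y ω = 1} := by
    conv_lhs => rw [hind]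
    exact integral_indicator_one (hY (measurableSet_singleton 1))
  rw [average_eq, hint, smul_eq_mul, inv_mul_eq_div]

theorem integrableOn_of_integrableOn_classes_inter (hY : Measurable Y)
    (hY01 : ∀ ω, Y ω = 0 ∨ Y ω = 1) {E : Type*} [NormedAddCommGroup E] {f : Ω → E} {A : Set Ω}
    (hf : ∀ y : ℝ, y = 0 ∨ y = 1 → IntegrableOn f ({ω | Y ω = y} ∩ A) μ) : IntegrableOn f A μ := by
  refine integrable_of_integrableOn_classes hY01 ?_ ?_ <;>
    rw [IntegrableOn, Measure.restrict_restrict (measurableSet_eq_fun hY measurable_const)]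
  exacts [hf 1 (.inr rfl), hf 0 (.inl rfl)]

end Binary

section ClassMean

variable {Ω E : Type*} [MeasurableSpace Ω] {μ ν : Measure Ω} {Y S : Ω → ℝ}
  [NormedAddCommGroup E] [NormedSpace ℝ E]

/-- The mean of `f` over the class `{Y = y}`, when the law of the population is proportional to the
measure `μ`. A subgroup `A` of the population is encoded as the measure `μ.restrict A`. -/
noncomputable def classMean (μ : Measure Ω) (Y : Ω → ℝ) (y : ℝ) (f : Ω → E) : E :=
  ⨍ ω in {ω | Y ω = y}, f ω ∂μ

theorem condMeanVec_inter_eq_classMean (hY : Measurable Y) (y : ℝ) (A : Set Ω) (f : Ω → E) :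
    condMeanVec μ ({ω | Y ω = y} ∩ A) f = classMean (μ.restrict A) Y y f := by
  rw [classMean, Measure.restrict_restrict (measurableSet_eq_fun hY measurable_const),
    setAverage_eq]
  rfl

theorem classMean_congr (hY : Measurable Y) {y : ℝ} {f g : Ω → E}
    (hfg : ∀ᵐ ω ∂μ, Y ω = y → f ω = g ω) : classMean μ Y y f = classMean μ Y y g :=
  setAverage_congr_fun (hY (measurableSet_singleton y)) hfg

theorem classMean_continuousLinearMap [CompleteSpace E] (ℓ : E →L[ℝ] ℝ) {y : ℝ} {φ : Ω → E}
    (hφ : IntegrableOn φ {ω | Y ω = y} μ) :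
    classMean μ Y y (fun ω ↦ ℓ (φ ω)) = ℓ (classMean μ Y y φ) :=
  ℓ.integral_comp_comm hφ.integrable.to_average

theorem classMean_mem_Icc [IsFiniteMeasure μ] {y a b : ℝ} (hy : μ {ω | Y ω = y} ≠ 0)
    (hS : Integrable S μ) (hSab : ∀ᵐ ω ∂μ, S ω ∈ Set.Icc a b) :
    classMean μ Y y S ∈ Set.Icc a b :=
  (convex_Icc a b).set_average_mem isClosed_Icc hy (measure_ne_top μ _) (ae_restrict_of_ae hSab)
    hS.integrableOn

theorem classMean_one_sub [IsFiniteMeasure μ] {y : ℝ} (hy : μ {ω | Y ω = y} ≠ 0)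
    (hS : Integrable S μ) : classMean μ Y y (fun ω ↦ 1 - S ω) = 1 - classMean μ Y y S := by
  have hconst : classMean μ Y y (fun _ ↦ (1 : ℝ)) = 1 :=
    setAverage_const hy (measure_ne_top μ _) 1
  calc classMean μ Y y (fun ω ↦ 1 - S ω)
      = classMean μ Y y (fun _ ↦ (1 : ℝ)) - classMean μ Y y S :=
        integral_sub (integrable_const 1).integrableOn.integrable.to_average
          hS.integrableOn.integrable.to_average
    _ = 1 - classMean μ Y y S := by rw [hconst]

theorem average_eq_add_classMean [IsFiniteMeasure μ] [NeZero μ] (hY : Measurable Y)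
    (hY01 : ∀ ω, Y ω = 0 ∨ Y ω = 1) {f : Ω → E} (hf : Integrable f μ) :
    ⨍ ω, f ω ∂μ = (⨍ ω, Y ω ∂μ) • classMean μ Y 1 f
      + (1 - ⨍ ω, Y ω ∂μ) • classMean μ Y 0 f := by
  have hcover := setOf_eq_one_union_setOf_eq_zero hY01
  have hmeas : MeasurableSet {ω | Y ω = 0} := hY (measurableSet_singleton 0)
  have hdisj : Disjoint {ω | Y ω = 1} {ω | Y ω = 0} :=
    Set.disjoint_left.2 fun _ h1 h0 ↦ one_ne_zero (h1.symm.trans h0)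
  have hsum : μ.real {ω | Y ω = 1} + μ.real {ω | Y ω = 0} = μ.real Set.univ := by
    rw [← hcover, measureReal_union hdisj hmeas]
  have hrate : 1 - ⨍ ω, Y ω ∂μ = μ.real {ω | Y ω = 0} / μ.real Set.univ := by
    rw [average_binary_eq_div hY hY01, one_sub_div measureReal_univ_ne_zero, ← hsum,
      add_sub_cancel_left]
  have hunion := average_union (f := f) hdisj.aedisjoint hmeas.nullMeasurableSet
    (measure_ne_top μ _) (measure_ne_top μ _) hf.integrableOn hf.integrableOn
  rwa [hcover, Measure.restrict_univ, hsum, ← hrate, ← average_binary_eq_div hY hY01] at hunion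

theorem average_abs_sub_eq [IsFiniteMeasure μ] (hY : Measurable Y)
    (hY01 : ∀ ω, Y ω = 0 ∨ Y ω = 1) (hpos : μ {ω | Y ω = 1} ≠ 0) (hS : Integrable S μ)
    (hS01 : ∀ᵐ ω ∂μ, S ω ∈ Set.Icc (0 : ℝ) 1) :
    ⨍ ω, |S ω - Y ω| ∂μ = (⨍ ω, Y ω ∂μ) * (1 - classMean μ Y 1 S)
      + (1 - ⨍ ω, Y ω ∂μ) * classMean μ Y 0 S := by
  have : NeZero μ := ⟨fun h ↦ hpos (by simp [h])⟩
  have herr1 : classMean μ Y 1 (fun ω ↦ |S ω - Y ω|) = 1 - classMean μ Y 1 S := by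
    rw [← classMean_one_sub hpos hS]
    refine classMean_congr hY ?_
    filter_upwards [hS01] with ω hω h1
    rw [h1, abs_sub_comm, abs_of_nonneg (sub_nonneg.2 hω.2)]
  have herr0 : classMean μ Y 0 (fun ω ↦ |S ω - Y ω|) = classMean μ Y 0 S := by
    refine classMean_congr hY ?_
    filter_upwards [hS01] with ω hω h0
    rw [h0, sub_zero, abs_of_nonneg hω.1]
  have herr : Integrable (fun ω ↦ |S ω - Y ω|) μ := (hS.sub (integrable_of_binary hY hY01)).abs
  rw [average_eq_add_classMean hY hY01 herr, herr1, herr0, smul_eq_mul, smul_eq_mul]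

theorem average_abs_sub_le [IsFiniteMeasure μ] (hY : Measurable Y)
    (hY01 : ∀ ω, Y ω = 0 ∨ Y ω = 1) (hpos1 : μ {ω | Y ω = 1} ≠ 0) (hpos0 : μ {ω | Y ω = 0} ≠ 0)
    (hS : Integrable S μ) (hS01 : ∀ᵐ ω ∂μ, S ω ∈ Set.Icc (0 : ℝ) 1) :
    ⨍ ω, |S ω - Y ω| ∂μ ≤ (1 - classMean μ Y 1 S) + classMean μ Y 0 S := by
  have : NeZero μ := ⟨fun h ↦ hpos1 (by simp [h])⟩
  obtain ⟨hp0, hp1⟩ := average_binary_mem_Icc (μ := μ) hY hY01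
  have hm1 := (classMean_mem_Icc hpos1 hS hS01).2
  have hm0 := (classMean_mem_Icc hpos0 hS hS01).1
  rw [average_abs_sub_eq hY hY01 hpos1 hS hS01]
  exact add_le_add (mul_le_of_le_one_left (sub_nonneg.2 hm1) hp1)
    (mul_le_of_le_one_left hm0 (sub_le_self 1 hp0))

theorem abs_average_sub_mul_average_abs_sub_le [IsFiniteMeasure μ] [IsFiniteMeasure ν] [NeZero ν]
    (hY : Measurable Y) (hY01 : ∀ ω, Y ω = 0 ∨ Y ω = 1)
    (hpos1 : μ {ω | Y ω = 1} ≠ 0) (hpos0 : μ {ω | Y ω = 0} ≠ 0)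
    (hSμ : Integrable S μ) (hSν : Integrable S ν) (hS01 : ∀ᵐ ω ∂μ, S ω ∈ Set.Icc (0 : ℝ) 1)
    (hμ : ⨍ ω, S ω ∂μ = ⨍ ω, Y ω ∂μ) (hν : ⨍ ω, S ω ∂ν = ⨍ ω, Y ω ∂ν) :
    |⨍ ω, Y ω ∂μ - ⨍ ω, Y ω ∂ν| * ⨍ ω, |S ω - Y ω| ∂μ
      ≤ (⨍ ω, Y ω ∂ν) * |classMean μ Y 1 S - classMean ν Y 1 S|
        + (1 - ⨍ ω, Y ω ∂ν) * |classMean μ Y 0 S - classMean ν Y 0 S| := by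
  have : NeZero μ := ⟨fun h ↦ hpos1 (by simp [h])⟩
  have hbalμ := (average_eq_add_classMean hY hY01 hSμ).symm.trans hμ
  have hbalν := (average_eq_add_classMean hY hY01 hSν).symm.trans hν
  have herr := average_abs_sub_le hY hY01 hpos1 hpos0 hSμ hS01
  obtain ⟨hq0, hq1⟩ := average_binary_mem_Icc (μ := ν) hY hY01
  simp only [smul_eq_mul] at hbalμ hbalν
  set p := ⨍ ω, Y ω ∂μ
  set q := ⨍ ω, Y ω ∂ν
  have hgap : (p - q) * ((1 - classMean μ Y 1 S) + classMean μ Y 0 S)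
      = q * (classMean μ Y 1 S - classMean ν Y 1 S)
        + (1 - q) * (classMean μ Y 0 S - classMean ν Y 0 S) := by
    linear_combination hbalν - hbalμ
  calc |p - q| * ⨍ ω, |S ω - Y ω| ∂μ
      ≤ |p - q| * |(1 - classMean μ Y 1 S) + classMean μ Y 0 S| := by
        gcongr
        exact herr.trans (le_abs_self _)
    _ = |q * (classMean μ Y 1 S - classMean ν Y 1 S)
          + (1 - q) * (classMean μ Y 0 S - classMean ν Y 0 S)| := by rw [← abs_mul, hgap]
    _ ≤ _ := (abs_add_le _ _).trans_eq <| by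
        rw [abs_mul, abs_mul, abs_of_nonneg hq0, abs_of_nonneg (sub_nonneg.2 hq1)]

theorem abs_classMean_sub_le [CompleteSpace E] {ℓ : E →L[ℝ] ℝ} {W : ℝ} (hℓ : ‖ℓ‖ ≤ W)
    {y : ℝ} {φ : Ω → E} (hμ : IntegrableOn φ {ω | Y ω = y} μ)
    (hν : IntegrableOn φ {ω | Y ω = y} ν) :
    |classMean μ Y y (fun ω ↦ ℓ (φ ω)) - classMean ν Y y (fun ω ↦ ℓ (φ ω))|
      ≤ W * ‖classMean μ Y y φ - classMean ν Y y φ‖ := by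
  rw [classMean_continuousLinearMap ℓ hμ, classMean_continuousLinearMap ℓ hν, ← map_sub]
  exact ℓ.le_of_opNorm_le hℓ _

theorem abs_average_sub_mul_average_abs_apply_sub_le [CompleteSpace E] [IsFiniteMeasure μ]
    [IsFiniteMeasure ν] [NeZero ν] (hY : Measurable Y) (hY01 : ∀ ω, Y ω = 0 ∨ Y ω = 1)
    (hpos1 : μ {ω | Y ω = 1} ≠ 0) (hpos0 : μ {ω | Y ω = 0} ≠ 0) {φ : Ω → E}
    (hφμ : Integrable φ μ) (hφν : Integrable φ ν)
    {ℓ : E →L[ℝ] ℝ} {W : ℝ} (hℓ : ‖ℓ‖ ≤ W)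
    (hℓ01 : ∀ᵐ ω ∂μ, ℓ (φ ω) ∈ Set.Icc (0 : ℝ) 1)
    (hμ : ⨍ ω, ℓ (φ ω) ∂μ = ⨍ ω, Y ω ∂μ) (hν : ⨍ ω, ℓ (φ ω) ∂ν = ⨍ ω, Y ω ∂ν) :
    |⨍ ω, Y ω ∂μ - ⨍ ω, Y ω ∂ν| * ⨍ ω, |ℓ (φ ω) - Y ω| ∂μ
      ≤ W * ((⨍ ω, Y ω ∂ν) * ‖classMean μ Y 1 φ - classMean ν Y 1 φ‖
        + (1 - ⨍ ω, Y ω ∂ν) * ‖classMean μ Y 0 φ - classMean ν Y 0 φ‖) := by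
  obtain ⟨hq0, hq1⟩ := average_binary_mem_Icc (μ := ν) hY hY01
  have hdiff (y : ℝ) := abs_classMean_sub_le (y := y) (Y := Y) hℓ hφμ.integrableOn hφν.integrableOn
  refine (abs_average_sub_mul_average_abs_sub_le hY hY01 hpos1 hpos0 (ℓ.integrable_comp hφμ)
    (ℓ.integrable_comp hφν) hℓ01 hμ hν).trans ?_
  rw [mul_add, mul_left_comm W, mul_left_comm W]
  exact add_le_add (mul_le_mul_of_nonneg_left (hdiff 1) hq0)
    (mul_le_mul_of_nonneg_left (hdiff 0) (sub_nonneg.2 hq1))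

theorem abs_condExpEvent_sub_mul_condExpEvent_abs_apply_sub_le [CompleteSpace E]
    [IsFiniteMeasure μ] (hY : Measurable Y) (hY01 : ∀ ω, Y ω = 0 ∨ Y ω = 1) {A B : Set Ω}
    (hposA : ∀ y : ℝ, y = 0 ∨ y = 1 → 0 < μ ({ω | Y ω = y} ∩ A)) (hposB : μ B ≠ 0) {φ : Ω → E}
    (hφA : IntegrableOn φ A μ) (hφB : IntegrableOn φ B μ)
    {ℓ : E →L[ℝ] ℝ} {W : ℝ} (hℓ : ‖ℓ‖ ≤ W)
    (hℓ01 : ∀ᵐ ω ∂μ.restrict A, ℓ (φ ω) ∈ Set.Icc (0 : ℝ) 1)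
    (hA : condExpEvent μ A (fun ω ↦ ℓ (φ ω)) = condExpEvent μ A Y)
    (hB : condExpEvent μ B (fun ω ↦ ℓ (φ ω)) = condExpEvent μ B Y) :
    |condExpEvent μ A Y - condExpEvent μ B Y| * condExpEvent μ A (fun ω ↦ |ℓ (φ ω) - Y ω|)
      ≤ W * (condExpEvent μ B Y * ‖condMeanVec μ ({ω | Y ω = 1} ∩ A) φ
          - condMeanVec μ ({ω | Y ω = 1} ∩ B) φ‖
        + (1 - condExpEvent μ B Y) * ‖condMeanVec μ ({ω | Y ω = 0} ∩ A) φ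
          - condMeanVec μ ({ω | Y ω = 0} ∩ B) φ‖) := by
  have hclass_ne (y : ℝ) (hy : y = 0 ∨ y = 1) : μ.restrict A {ω | Y ω = y} ≠ 0 := by
    rw [Measure.restrict_apply (measurableSet_eq_fun hY measurable_const)]
    exact (hposA y hy).ne'
  have : NeZero (μ.restrict B) := ⟨Measure.restrict_eq_zero.not.2 hposB⟩
  simp only [condExpEvent_eq_setAverage, condMeanVec_inter_eq_classMean hY] at hA hB ⊢
  exact abs_average_sub_mul_average_abs_apply_sub_le hY hY01 (hclass_ne 1 (.inr rfl))
    (hclass_ne 0 (.inl rfl)) hφA hφB hℓ hℓ01 hA hB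

end ClassMean

theorem iUnion_setOf_eq_fiber {Ω ι : Type*} (G : Ω → ι) : ⋃ g, {ω | G ω = g} = Set.univ :=
  Set.iUnion_eq_univ_iff.2 fun ω ↦ ⟨G ω, rfl⟩

section Fibers

variable {Ω ι : Type*} [MeasurableSpace Ω] {μ : Measure Ω} [Finite ι] {G : Ω → ι}

theorem integrable_of_integrableOn_fibers {E : Type*} [NormedAddCommGroup E] {f : Ω → E}
    (hf : ∀ g, IntegrableOn f {ω | G ω = g} μ) : Integrable f μ := by
  rw [← integrableOn_univ, ← iUnion_setOf_eq_fiber G]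
  exact integrableOn_finite_iUnion.2 hf

variable [MeasurableSpace ι] [MeasurableSingletonClass ι] {f : Ω → ℝ} {C t : ℝ}

theorem integral_le_of_forall_average_fiber_le [IsFiniteMeasure μ] (hG : Measurable G)
    (hf : ∀ g, IntegrableOn f {ω | G ω = g} μ) (hC : ∀ g, ⨍ ω in {ω | G ω = g}, f ω ∂μ ≤ C) :
    ∫ ω, f ω ∂μ ≤ μ.real Set.univ * C := by
  have := Fintype.ofFinite ι
  have hmeas (g : ι) : MeasurableSet {ω | G ω = g} := hG (measurableSet_singleton g)
  have hdisj : Pairwise (Function.onFun Disjoint fun g ↦ {ω | G ω = g}) := fun _ _ hgh ↦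
    Set.disjoint_left.2 fun _ hg hh ↦ hgh (hg.symm.trans hh)
  calc ∫ ω, f ω ∂μ = ∑ g, ∫ ω in {ω | G ω = g}, f ω ∂μ := by
        rw [← integral_iUnion_fintype hmeas hdisj hf, iUnion_setOf_eq_fiber, setIntegral_univ]
    _ = ∑ g, μ.real {ω | G ω = g} * ⨍ ω in {ω | G ω = g}, f ω ∂μ :=
        Finset.sum_congr rfl fun g _ ↦ (measure_smul_setAverage f (measure_ne_top μ _)).symm
    _ ≤ ∑ g, μ.real {ω | G ω = g} * C := by
        gcongr with g
        exact hC g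
    _ = μ.real Set.univ * C := by
        rw [← Finset.sum_mul, ← iUnion_setOf_eq_fiber G, measureReal_iUnion_fintype hdisj hmeas]

theorem measureReal_lt_le_of_forall_average_fiber_le [IsFiniteMeasure μ] (hG : Measurable G)
    (hf : ∀ g, IntegrableOn f {ω | G ω = g} μ) (hf0 : 0 ≤ᵐ[μ] f)
    (hC : ∀ g, ⨍ ω in {ω | G ω = g}, f ω ∂μ ≤ C) (ht : 0 < t) :
    μ.real {ω | t < f ω} ≤ μ.real Set.univ * (C / t) := by
  rw [← mul_div_assoc, le_div_iff₀' ht]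
  calc t * μ.real {ω | t < f ω} ≤ t * μ.real {ω | t ≤ f ω} :=
        mul_le_mul_of_nonneg_left (measureReal_mono fun _ (h : t < _) ↦ h.le) ht.le
    _ ≤ ∫ ω, f ω ∂μ :=
        mul_meas_ge_le_integral_of_nonneg hf0 (integrable_of_integrableOn_fibers hf) t
    _ ≤ μ.real Set.univ * C := integral_le_of_forall_average_fiber_le hG hf hC

end Fibers

theorem pokemon_kmr_bridge_general {Ω : Type*} [MeasurableSpace Ω] (μ : Measure Ω)
    [IsFiniteMeasure μ]
    (Y : Ω → ℝ) (hYmeas : Measurable Y) (hY01 : ∀ ω, Y ω = 0 ∨ Y ω = 1)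
    (G : Ω → Bool) (hGmeas : Measurable G)
    (p : Bool → ℝ) (hp : ∀ g, p g = condExpEvent μ {ω | G ω = g} Y)
    {E : Type*} [NormedAddCommGroup E] [NormedSpace ℝ E] [CompleteSpace E] (φ : Ω → E)
    (hpos : ∀ y : ℝ, y = 0 ∨ y = 1 → ∀ g : Bool, 0 < μ ({ω | Y ω = y} ∩ {ω | G ω = g}))
    (hφint : ∀ y : ℝ, y = 0 ∨ y = 1 → ∀ g : Bool,
      IntegrableOn φ ({ω | Y ω = y} ∩ {ω | G ω = g}) μ)
    (W : ℝ) (ℓ : E →L[ℝ] ℝ) (hℓ : ‖ℓ‖ ≤ W)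
    (S : Ω → ℝ) (hS : ∀ ω, S ω = ℓ (φ ω))
    (hS01 : ∀ᵐ ω ∂μ, 0 ≤ S ω ∧ S ω ≤ 1)
    (hunbiased : ∀ g, condExpEvent μ {ω | G ω = g} S = p g)
    (δ : ℝ → E)
    (hδ : ∀ y : ℝ, δ y = condMeanVec μ ({ω | Y ω = y} ∩ {ω | G ω = true}) φ
      - condMeanVec μ ({ω | Y ω = y} ∩ {ω | G ω = false}) φ)
    (ρ : ℝ)
    (hρ : ρ = max (p false * ‖δ 1‖ + (1 - p false) * ‖δ 0‖)
                  (p true * ‖δ 1‖ + (1 - p true) * ‖δ 0‖))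
    (hbase : p true ≠ p false) {t : ℝ} (ht : 0 < t) :
    μ.real {ω | t < |S ω - Y ω|}
      ≤ μ.real Set.univ * (W * ρ / (|p true - p false| * t)) := by
  obtain rfl : S = fun ω ↦ ℓ (φ ω) := funext hS
  have hφ (g : Bool) : IntegrableOn φ {ω | G ω = g} μ :=
    integrableOn_of_integrableOn_classes_inter hYmeas hY01 fun y hy ↦ hφint y hy g
  have hpair (g h : Bool) := abs_condExpEvent_sub_mul_condExpEvent_abs_apply_sub_le hYmeas hY01
    (fun y hy ↦ hpos y hy g) (measure_pos_of_superset Set.inter_subset_right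
      (hpos 1 (.inr rfl) h).ne').ne' (hφ g) (hφ h) hℓ (ae_restrict_of_ae hS01)
    ((hunbiased g).trans (hp g)) ((hunbiased h).trans (hp h))
  simp only [← hp] at hpair
  have hgroup (g : Bool) :
      |p true - p false| * condExpEvent μ {ω | G ω = g} (fun ω ↦ |ℓ (φ ω) - Y ω|) ≤ W * ρ := by
    have hW : 0 ≤ W := (norm_nonneg ℓ).trans hℓ
    rw [hρ, hδ, hδ]
    cases g
    · rw [abs_sub_comm, norm_sub_rev (condMeanVec _ ({ω | Y ω = 1} ∩ _) φ),
        norm_sub_rev (condMeanVec _ ({ω | Y ω = 0} ∩ _) φ)]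
      exact (hpair false true).trans (mul_le_mul_of_nonneg_left (le_max_right _ _) hW)
    · exact (hpair true false).trans (mul_le_mul_of_nonneg_left (le_max_left _ _) hW)
  rw [← div_div]
  refine measureReal_lt_le_of_forall_average_fiber_le hGmeas (fun g ↦ ?_)
    (.of_forall fun ω ↦ abs_nonneg _) (fun g ↦ ?_) ht
  · exact ((ℓ.integrable_comp (hφ g)).sub (integrable_of_binary hYmeas hY01)).abs
  · rw [← condExpEvent_eq_setAverage]
    exact (le_div_iff₀' (abs_pos.2 (sub_ne_zero.2 hbase))).2 (hgroup g)

/-- **Pokémon–KMR bridge, tail bound.** For a score `S = ⟪w, φ⟫` that is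
group-conditionally unbiased, the distance of `S` from `Y` has tails controlled by
the class-conditional group differences `δ_y` of the feature map `φ`, rescaled by the
base-rate gap. -/
theorem pokemon_kmr_bridge {Ω : Type*} [MeasurableSpace Ω] (μ : Measure Ω)
    [IsProbabilityMeasure μ]
    (Y : Ω → ℝ) (hYmeas : Measurable Y) (hY01 : ∀ ω, Y ω = 0 ∨ Y ω = 1)
    (G : Ω → Bool) (hGmeas : Measurable G)
    (hGa : 0 < μ {ω | G ω = true}) (hGb : 0 < μ {ω | G ω = false})
    (p : Bool → ℝ) (hp : ∀ g, p g = condExpEvent μ {ω | G ω = g} Y)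
    (hp01 : ∀ g, 0 < p g ∧ p g < 1)
    {H : Type*} [NormedAddCommGroup H] [InnerProductSpace ℝ H] [CompleteSpace H]
    (φ : Ω → H) (hφmeas : StronglyMeasurable φ)
    (hpos : ∀ y : ℝ, y = 0 ∨ y = 1 → ∀ g : Bool, 0 < μ ({ω | Y ω = y} ∩ {ω | G ω = g}))
    (hφint : ∀ y : ℝ, y = 0 ∨ y = 1 → ∀ g : Bool,
      IntegrableOn φ ({ω | Y ω = y} ∩ {ω | G ω = g}) μ)
    (W : ℝ) (hW : 0 ≤ W) (w : H) (hw : ‖w‖ ≤ W)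
    (S : Ω → ℝ) (hS : ∀ ω, S ω = ⟪w, φ ω⟫)
    (hS01 : ∀ᵐ ω ∂μ, 0 ≤ S ω ∧ S ω ≤ 1)
    (hunbiased : ∀ g, condExpEvent μ {ω | G ω = g} S = p g)
    (δ : ℝ → H)
    (hδ : ∀ y : ℝ, δ y = condMeanVec μ ({ω | Y ω = y} ∩ {ω | G ω = true}) φ
      - condMeanVec μ ({ω | Y ω = y} ∩ {ω | G ω = false}) φ)
    (ρ : ℝ)
    (hρ : ρ = max (p false * ‖δ 1‖ + (1 - p false) * ‖δ 0‖)
                  (p true * ‖δ 1‖ + (1 - p true) * ‖δ 0‖))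
    (hbase : p true ≠ p false) :
    ∀ t : ℝ, 0 < t → t ≤ 1 →
      (μ {ω | t < |S ω - Y ω|}).toReal ≤ W * ρ / (|p true - p false| * t) := by
  intro t ht _
  rw [← measureReal_def]
  simpa only [probReal_univ, one_mul] using
    pokemon_kmr_bridge_general μ Y hYmeas hY01 G hGmeas p hp φ hpos hφint W
      (innerSL ℝ w) ((innerSL_apply_norm (𝕜 := ℝ) w).trans_le hw) S hS hS01 hunbiased δ hδ ρ hρ
      hbase ht
end
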